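/- Let n ≥ 5, j ∈ ZMod n, and 0 ≤ k ≤ n−4. Then P(j,k+1) = (P(j,k) \ {{j+1, j+k+3}}) ∪ {{j+2, j+k+4}}, where the chord {j+1, j+k+3} belongs to P(j,k), the chord {j+2, j+k+4} does not belong to P(j,k), and the removed chord {j+1, j+k+3} crosses the added chord {j+2, j+k+4}. In particular, consecutive pants decompositions along the paper's path C differ by replacing exactly one curve by a curve crossing it (an A-move in the pants graph). -/

import Mathlib

/-!
`P n j k` consists of the chords of lengths `k + 2, …, n - 2` of the fan with apex `j + 1` and the
chords of lengths `2, …, k + 1` of the fan with apex `j + 2`. Passing to `k + 1` keeps all of them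
except the shortest chord of the first fan, which gives way to the chord of the same length
`k + 2` in the second. This is an exact replacement because a chord of a fan is determined by its
length and fans with consecutive apexes have no chord in common. The two chords cross because,
seen from `j + 1`, the added one starts strictly inside the arc of the removed one and ends just
beyond it.
-/

/-- `c` lies strictly between `a` and `b` (going counterclockwise from `a` to `b`)
on the circle of gaps `ZMod n`. -/
def GapBtw (n : ℕ) (a b c : ZMod n) : Prop :=
  0 < (c - a).val ∧ (c - a).val < (b - a).val

/-- The ordered pair `(a, b)` spans a chord: the gaps `a` and `b` are distinct and
non-adjacent, i.e. `(b - a).val ∉ {0, 1, n - 1}`. -/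
def IsChordPair (n : ℕ) (a b : ZMod n) : Prop :=
  (b - a).val ∉ ({0, 1, n - 1} : Set ℕ)

/-- The unordered pair `s` is a chord of `ZMod n`: it is of the form `{a, b}` with
`a`, `b` distinct non-adjacent gaps. -/
def IsChord (n : ℕ) (s : Finset (ZMod n)) : Prop :=
  ∃ a b : ZMod n, s = {a, b} ∧ IsChordPair n a b

/-- The ordered chords `(a,b)` and `(c,d)` cross: they share no endpoint and exactly
one of `c`, `d` lies strictly between `a` and `b`. -/
def CrossOrd (n : ℕ) (a b c d : ZMod n) : Prop :=
  a ≠ c ∧ a ≠ d ∧ b ≠ c ∧ b ≠ d ∧ Xor' (GapBtw n a b c) (GapBtw n a b d)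

/-- The unordered chords `s` and `t` cross. -/
def Crosses (n : ℕ) (s t : Finset (ZMod n)) : Prop :=
  ∃ a b c d : ZMod n, s = {a, b} ∧ t = {c, d} ∧ CrossOrd n a b c d

/-- The pants decomposition `P(j,k)`, the vertex `P_{j(n-3)+k}` of the paper's closed
path `C` in the pants graph of the `n`-punctured sphere:
`P(j,k) = {{j+1, j+1+t} : k+2 ≤ t ≤ n-2} ∪ {{j+2, j+2+t} : 2 ≤ t ≤ k+1}`. -/
def P (n : ℕ) (j : ZMod n) (k : ℕ) : Finset (Finset (ZMod n)) :=
  ((Finset.Icc (k + 2) (n - 2)).image fun t : ℕ => ({j + 1, j + 1 + (t : ZMod n)} : Finset (ZMod n)))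
    ∪ ((Finset.Icc 2 (k + 1)).image fun t : ℕ => ({j + 2, j + 2 + (t : ZMod n)} : Finset (ZMod n)))

/-- The pair formed by the gaps `a` and `a + t`, seen as the chord of length `t` in the fan with
apex `a`. Lengths are kept in `ℕ`, where they can be compared. -/
def fanChord {n : ℕ} (a : ZMod n) (t : ℕ) : Finset (ZMod n) :=
  {a, a + (t : ZMod n)}

/-- The fan with apex `a` formed by the chords whose lengths lie in `S`. -/
def fan {n : ℕ} (a : ZMod n) (S : Finset ℕ) : Finset (Finset (ZMod n)) :=
  S.image (fanChord a)

/-- The chords shared by `P(j,k)` and `P(j,k+1)`. -/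
def commonChords (n : ℕ) (j : ZMod n) (k : ℕ) : Finset (Finset (ZMod n)) :=
  fan (j + 1) (Finset.Icc (k + 3) (n - 2)) ∪ fan (j + 2) (Finset.Icc 2 (k + 1))

theorem pair_right_injective {α : Type*} [DecidableEq α] (a : α) :
    Function.Injective fun b => ({a, b} : Finset α) := by
  intro b c (h : ({a, b} : Finset α) = {a, c})
  have hb : b ∈ ({a, c} : Finset α) := by simp [← h]
  have hc : c ∈ ({a, b} : Finset α) := by simp [h]
  grind

section Fan

variable {n : ℕ} {a : ZMod n} {S T : Finset ℕ} {s t : ℕ}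

theorem fanChord_injOn : Set.InjOn (fanChord a) (Set.Iio n) :=
  ((pair_right_injective a).comp (add_right_injective a)).comp_injOn
    (CharP.natCast_injOn_Iio (ZMod n) n)

theorem fanChord_mem_fan_iff (hS : ∀ s ∈ S, s < n) (ht : t < n) :
    fanChord a t ∈ fan a S ↔ t ∈ S := by
  rw [fan, ← Finset.mem_coe, Finset.coe_image, fanChord_injOn.mem_image_iff hS ht, Finset.mem_coe]

theorem fan_insert : fan a (insert t S) = insert (fanChord a t) (fan a S) :=
  Finset.image_insert _ _ _

theorem notMem_fanChord_add_one (ht : t + 1 < n) : a ∉ fanChord (a + 1) t := by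
  have add_ne_self {m : ℕ} (hm : m + 1 < n) : a + ((m + 1 : ℕ) : ZMod n) ≠ a := by
    rw [Ne, add_eq_left, ZMod.natCast_eq_zero_iff]
    exact Nat.not_dvd_of_pos_of_lt m.succ_pos hm
  have h_apex : a ≠ a + 1 := by
    simpa only [zero_add, Nat.cast_one] using (add_ne_self (m := 0) (by lia)).symm
  have h_end : a ≠ a + 1 + t := by
    simpa only [Nat.cast_succ, add_assoc, add_comm (1 : ZMod n)] using (add_ne_self ht).symm
  simp only [fanChord, Finset.mem_insert, Finset.mem_singleton, h_apex, h_end, or_self,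
    not_false_eq_true]

theorem fanChord_ne_fanChord_add_one (ht : t + 1 < n) : fanChord a s ≠ fanChord (a + 1) t :=
  fun h => notMem_fanChord_add_one ht (h.subset (Finset.mem_insert_self a _))

theorem fanChord_notMem_fan_add_one (hT : ∀ t ∈ T, t + 1 < n) :
    fanChord a s ∉ fan (a + 1) T := by
  rw [fan, Finset.mem_image]
  rintro ⟨t, ht, h⟩
  exact fanChord_ne_fanChord_add_one (hT t ht) h.symm

theorem fanChord_add_one_notMem_fan (ht : t + 1 < n) : fanChord (a + 1) t ∉ fan a S := by
  rw [fan, Finset.mem_image]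
  rintro ⟨s, -, h⟩
  exact fanChord_ne_fanChord_add_one ht h

end Fan

section Crossing

variable {n : ℕ} {a b c d : ZMod n}

theorem crosses_of_val_sub_lt (hc : 0 < (c - a).val) (hcb : (c - a).val < (b - a).val)
    (hbd : (b - a).val < (d - a).val) : Crosses n {a, b} {c, d} := by
  refine ⟨a, b, c, d, rfl, rfl, ?_, ?_, ?_, ?_, Or.inl ⟨⟨hc, hcb⟩, fun h => hbd.not_gt h.2⟩⟩
  · rintro rfl
    simp at hc
  · rintro rfl
    simp at hbd
  · exact fun h => hcb.ne (h ▸ rfl)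
  · exact fun h => hbd.ne (h ▸ rfl)

theorem crosses_fanChord_fanChord_add_one {s t : ℕ} (hs : 1 < s) (hst : s ≤ t) (ht : t + 1 < n) :
    Crosses n (fanChord a s) (fanChord (a + 1) t) := by
  have val_one : (a + 1 - a).val = 1 := by
    rw [add_sub_cancel_left, ← Nat.cast_one, ZMod.val_natCast_of_lt (by lia)]
  have val_s : (a + s - a).val = s := by
    rw [add_sub_cancel_left, ZMod.val_natCast_of_lt (by lia)]
  have val_t : (a + 1 + t - a).val = t + 1 := by
    rw [add_assoc, add_sub_cancel_left, add_comm, ← Nat.cast_succ, ZMod.val_natCast_of_lt ht]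
  apply crosses_of_val_sub_lt <;> lia

end Crossing

theorem add_two_eq_add_one_add_one {R : Type*} [AddMonoidWithOne R] (x : R) :
    x + 2 = x + 1 + 1 := by
  rw [add_assoc, one_add_one_eq_two]

section Replacement

variable {n : ℕ} (j : ZMod n) {k : ℕ}

theorem P_eq_fan_union_fan :
    P n j k = fan (j + 1) (Finset.Icc (k + 2) (n - 2)) ∪ fan (j + 2) (Finset.Icc 2 (k + 1)) :=
  rfl

theorem P_eq_insert_commonChords (hk : k + 4 ≤ n) :
    P n j k = insert (fanChord (j + 1) (k + 2)) (commonChords n j k) := by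
  rw [P_eq_fan_union_fan, ← Finset.insert_Icc_add_one_left_eq_Icc (by lia), fan_insert,
    Finset.insert_union]
  rfl

theorem P_succ_eq_insert_commonChords :
    P n j (k + 1) = insert (fanChord (j + 2) (k + 2)) (commonChords n j k) := by
  rw [P_eq_fan_union_fan, ← Finset.insert_Icc_right_eq_Icc_add_one (by lia), fan_insert,
    Finset.union_insert]
  rfl

theorem fanChord_notMem_commonChords (hk : k + 2 < n) :
    fanChord (j + 1) (k + 2) ∉ commonChords n j k := by
  rw [commonChords, Finset.notMem_union, add_two_eq_add_one_add_one j]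
  constructor
  · rw [fanChord_mem_fan_iff (by grind) hk]
    simp
  · exact fanChord_notMem_fan_add_one (by grind)

theorem fanChord_notMem_P (hk : k + 3 < n) : fanChord (j + 2) (k + 2) ∉ P n j k := by
  rw [P_eq_fan_union_fan, Finset.notMem_union, add_two_eq_add_one_add_one j]
  constructor
  · exact fanChord_add_one_notMem_fan hk
  · rw [fanChord_mem_fan_iff (by grind) (by lia)]
    simp

theorem P_succ_eq_sdiff_union (hk : k + 4 ≤ n) :
    P n j (k + 1) =
      (P n j k \ {fanChord (j + 1) (k + 2)}) ∪ {fanChord (j + 2) (k + 2)} := by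
  rw [P_succ_eq_insert_commonChords, P_eq_insert_commonChords j hk, Finset.sdiff_singleton_eq_erase,
    Finset.erase_insert (fanChord_notMem_commonChords j (by lia)), Finset.union_singleton]

end Replacement

/-- Consecutive pants decompositions along the path `C` differ by replacing the single
chord `{j+1, j+k+3}` by the chord `{j+2, j+k+4}`, which crosses it (an A-move). -/
theorem P_succ_is_Amove (n : ℕ) (hn : 5 ≤ n) (j : ZMod n) (k : ℕ) (hk : k ≤ n - 4) :
    P n j (k + 1) =
      (P n j k \ {({j + 1, j + (k : ZMod n) + 3} : Finset (ZMod n))}) ∪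
        {({j + 2, j + (k : ZMod n) + 4} : Finset (ZMod n))} ∧
    ({j + 1, j + (k : ZMod n) + 3} : Finset (ZMod n)) ∈ P n j k ∧
    ({j + 2, j + (k : ZMod n) + 4} : Finset (ZMod n)) ∉ P n j k ∧
    Crosses n {j + 1, j + (k : ZMod n) + 3} {j + 2, j + (k : ZMod n) + 4} := by
  have h_removed : ({j + 1, j + (k : ZMod n) + 3} : Finset (ZMod n)) =
      fanChord (j + 1) (k + 2) := by
    rw [fanChord]
    congr 2
    push_cast
    ring
  have h_added : ({j + 2, j + (k : ZMod n) + 4} : Finset (ZMod n)) =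
      fanChord (j + 2) (k + 2) := by
    rw [fanChord]
    congr 2
    push_cast
    ring
  have hkn : k + 4 ≤ n := by lia
  rw [h_removed, h_added]
  refine ⟨P_succ_eq_sdiff_union j hkn, ?_, fanChord_notMem_P j hkn, ?_⟩
  · rw [P_eq_insert_commonChords j hkn]
    exact Finset.mem_insert_self _ _
  · rw [add_two_eq_add_one_add_one j]
    exact crosses_fanChord_fanChord_add_one (by lia) le_rfl (by lia)
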